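/- For every natural number n ≥ 1, setting D(n) = 11·(10^(n+4) − 1)·10^(n+2) (the number whose decimal expansion is 1, 0, 9, followed by n nines, then 9, 8, 9, followed by n+2 zeros), eight iterations of the digit-reversal map f advance the pattern: f^[8](D(n)) = D(n+2). -/

import Mathlib

/-!
The orbit of `D(n)` is followed digit by digit.  With `9ⁿ`, `0ⁿ` for runs of `n` equal digits, the
eight steps go through the decimal expansions

* `10 9ⁿ 99 89 0ⁿ 00`, which is `D(n)`,
* `10 9ⁿ 00 89 0ⁿ 99`,
* `10 9ⁿ 99 89 0ⁿ 000`,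
* `10 9ⁿ 8999 0ⁿ 099`,
* `10 9ⁿ 9999 89 0ⁿ 00`,
* `10 9ⁿ 0099 89 0ⁿ 99`,
* `10 9ⁿ 9999 89 0ⁿ 000`,
* `10 9ⁿ 900 989 0ⁿ 099`,
* `10 9ⁿ 9999 89 0ⁿ 0000`, which is `D(n+2)`,

alternating between a subtraction (the trailing zeros make the reversal small) and an addition (the
expansion begins with `10` and ends with `99`).  Every expansion is `word s t u n` below, whose
reversal is explicit because its extreme digits are known.  Writing `r = 10ⁿ - 1` for the
number with digits `9ⁿ`, the value of each word is a polynomial in `r` with natural coefficients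
(`ofDigits_word`, `ofDigits_word_reverse`), so each step is a polynomial identity
together with an inequality.
-/

def rev (n : ℕ) : ℕ := Nat.ofDigits 10 ((Nat.digits 10 n).reverse)

def f (n : ℕ) : ℕ := if rev n < n then n - rev n else n + rev n

/-- The digit list, least significant digit first, `s 0ⁿ t 9ⁿ u`. -/
def word (s t u : List ℕ) (n : ℕ) : List ℕ :=
  s ++ (List.replicate n 0 ++ (t ++ (List.replicate n 9 ++ u)))

theorem ofDigits_replicate_zero (n : ℕ) : Nat.ofDigits 10 (List.replicate n 0) = 0 := by
  induction n with
  | zero => rfl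
  | succ n ih => simp [List.replicate_succ, Nat.ofDigits_cons, ih]

theorem ofDigits_replicate_nine (n : ℕ) :
    Nat.ofDigits 10 (List.replicate n 9) + 1 = 10 ^ n := by
  induction n with
  | zero => rfl
  | succ n ih =>
    rw [List.replicate_succ, Nat.ofDigits_cons, pow_succ, ← ih]
    ring

theorem ofDigits_word (s t u : List ℕ) {n r : ℕ} (hr : r + 1 = 10 ^ n) :
    Nat.ofDigits 10 (word s t u n) = Nat.ofDigits 10 s + 10 ^ s.length * ((r + 1) *
      (Nat.ofDigits 10 t + 10 ^ t.length * (r + (r + 1) * Nat.ofDigits 10 u))) := by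
  have h : Nat.ofDigits 10 (List.replicate n 9) = r := by
    have := ofDigits_replicate_nine n
    omega
  simp only [word, Nat.ofDigits_append, List.length_replicate, ofDigits_replicate_zero, h, ← hr,
    zero_add]

theorem ofDigits_word_reverse (s t u : List ℕ) {n r : ℕ} (hr : r + 1 = 10 ^ n) :
    Nat.ofDigits 10 (word s t u n).reverse =
      Nat.ofDigits 10 u.reverse + 10 ^ u.length * (r + (r + 1) *
        (Nat.ofDigits 10 t.reverse + 10 ^ t.length * ((r + 1) * Nat.ofDigits 10 s.reverse))) := by
  have h : Nat.ofDigits 10 (List.replicate n 9) = r := by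
    have := ofDigits_replicate_nine n
    omega
  simp only [word, List.reverse_append, List.append_assoc, List.reverse_replicate,
    Nat.ofDigits_append, List.length_reverse, List.length_replicate, ofDigits_replicate_zero, h,
    ← hr, zero_add]

/-- A word with leading digits `10` has nonzero top digit, so it is
the actual digit list of its value. -/
theorem rev_word (s t u : List ℕ) (n : ℕ) (hs : ∀ d ∈ s, d < 10) (ht : ∀ d ∈ t, d < 10)
    (hu : ∀ d ∈ u, d < 10) :
    rev (Nat.ofDigits 10 (word s t (u ++ [0, 1]) n)) =
      Nat.ofDigits 10 (word s t (u ++ [0, 1]) n).reverse := by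
  rw [rev, Nat.digits_ofDigits 10 (by norm_num)]
  · intro d hd
    simp only [word, List.mem_append, List.mem_replicate, List.mem_cons, List.not_mem_nil,
      or_false] at hd
    rcases hd with h | h | h | h | h | h | h
    · exact hs d h
    · omega
    · exact ht d h
    · omega
    · exact hu d h
    · omega
    · omega
  · intro _
    simp [word]

theorem f_eq_of_rev_add {x y z : ℕ} (h : rev x = y) (hz : 0 < z) (hx : y + z = x) : f x = z := by
  unfold f
  split_ifs <;> omega

theorem f_eq_of_add_rev {x y z : ℕ} (h : rev x = y) (hz : x ≤ y) (hx : x + y = z) : f x = z := by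
  unfold f
  split_ifs <;> omega

/-- A subtraction step from one word to another, reduced to values in `r = 10ⁿ - 1`. -/
theorem f_word_sub (s t u s₁ t₁ u₁ : List ℕ) (n : ℕ)
    (hs : ∀ d ∈ s, d < 10) (ht : ∀ d ∈ t, d < 10) (hu : ∀ d ∈ u, d < 10)
    (h : ∀ r, r + 1 = 10 ^ n → 0 < Nat.ofDigits 10 (word s₁ t₁ (u₁ ++ [0, 1]) n) ∧
      Nat.ofDigits 10 (word s t (u ++ [0, 1]) n).reverse +
        Nat.ofDigits 10 (word s₁ t₁ (u₁ ++ [0, 1]) n) =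
        Nat.ofDigits 10 (word s t (u ++ [0, 1]) n)) :
    f (Nat.ofDigits 10 (word s t (u ++ [0, 1]) n)) =
      Nat.ofDigits 10 (word s₁ t₁ (u₁ ++ [0, 1]) n) :=
  have key := h _ (ofDigits_replicate_nine n)
  f_eq_of_rev_add (rev_word s t u n hs ht hu) key.1 key.2

/-- An addition step from one word to another, reduced to values in `r = 10ⁿ - 1`. -/
theorem f_word_add (s t u s₁ t₁ u₁ : List ℕ) (n : ℕ)
    (hs : ∀ d ∈ s, d < 10) (ht : ∀ d ∈ t, d < 10) (hu : ∀ d ∈ u, d < 10)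
    (h : ∀ r, r + 1 = 10 ^ n →
      Nat.ofDigits 10 (word s t (u ++ [0, 1]) n) ≤
        Nat.ofDigits 10 (word s t (u ++ [0, 1]) n).reverse ∧
      Nat.ofDigits 10 (word s t (u ++ [0, 1]) n) +
        Nat.ofDigits 10 (word s t (u ++ [0, 1]) n).reverse =
        Nat.ofDigits 10 (word s₁ t₁ (u₁ ++ [0, 1]) n)) :
    f (Nat.ofDigits 10 (word s t (u ++ [0, 1]) n)) =
      Nat.ofDigits 10 (word s₁ t₁ (u₁ ++ [0, 1]) n) :=
  have key := h _ (ofDigits_replicate_nine n)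
  f_eq_of_add_rev (rev_word s t u n hs ht hu) key.1 key.2

theorem step_one (n : ℕ) :
    f (Nat.ofDigits 10 (word [0, 0] [9, 8] ([9, 9] ++ [0, 1]) n)) =
      Nat.ofDigits 10 (word [9, 9] [9, 8, 0, 0] ([] ++ [0, 1]) n) := by
  refine f_word_sub _ _ _ _ _ _ n (by simp) (by simp) (by simp) fun r hr => ?_
  simp only [ofDigits_word _ _ _ hr, ofDigits_word_reverse _ _ _ hr]
  norm_num [Nat.ofDigits_cons]
  ring

theorem step_two (n : ℕ) :
    f (Nat.ofDigits 10 (word [9, 9] [9, 8, 0, 0] ([] ++ [0, 1]) n)) =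
      Nat.ofDigits 10 (word [0, 0, 0] [9, 8] ([9, 9] ++ [0, 1]) n) := by
  refine f_word_add _ _ _ _ _ _ n (by simp) (by simp) (by simp) fun r hr => ?_
  simp only [ofDigits_word _ _ _ hr, ofDigits_word_reverse _ _ _ hr]
  norm_num [Nat.ofDigits_cons]
  constructor
  · nlinarith
  · ring

theorem step_three (n : ℕ) :
    f (Nat.ofDigits 10 (word [0, 0, 0] [9, 8] ([9, 9] ++ [0, 1]) n)) =
      Nat.ofDigits 10 (word [9, 9, 0] [9, 9, 9, 8] ([] ++ [0, 1]) n) := by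
  refine f_word_sub _ _ _ _ _ _ n (by simp) (by simp) (by simp) fun r hr => ?_
  simp only [ofDigits_word _ _ _ hr, ofDigits_word_reverse _ _ _ hr]
  norm_num [Nat.ofDigits_cons]
  ring

theorem step_four (n : ℕ) :
    f (Nat.ofDigits 10 (word [9, 9, 0] [9, 9, 9, 8] ([] ++ [0, 1]) n)) =
      Nat.ofDigits 10 (word [0, 0] [9, 8] ([9, 9, 9, 9] ++ [0, 1]) n) := by
  refine f_word_add _ _ _ _ _ _ n (by simp) (by simp) (by simp) fun r hr => ?_
  simp only [ofDigits_word _ _ _ hr, ofDigits_word_reverse _ _ _ hr]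
  norm_num [Nat.ofDigits_cons]
  constructor
  · nlinarith
  · ring

theorem step_five (n : ℕ) :
    f (Nat.ofDigits 10 (word [0, 0] [9, 8] ([9, 9, 9, 9] ++ [0, 1]) n)) =
      Nat.ofDigits 10 (word [9, 9] [9, 8, 9, 9, 0, 0] ([] ++ [0, 1]) n) := by
  refine f_word_sub _ _ _ _ _ _ n (by simp) (by simp) (by simp) fun r hr => ?_
  simp only [ofDigits_word _ _ _ hr, ofDigits_word_reverse _ _ _ hr]
  norm_num [Nat.ofDigits_cons]
  ring

theorem step_six (n : ℕ) :
    f (Nat.ofDigits 10 (word [9, 9] [9, 8, 9, 9, 0, 0] ([] ++ [0, 1]) n)) =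
      Nat.ofDigits 10 (word [0, 0, 0] [9, 8] ([9, 9, 9, 9] ++ [0, 1]) n) := by
  refine f_word_add _ _ _ _ _ _ n (by simp) (by simp) (by simp) fun r hr => ?_
  simp only [ofDigits_word _ _ _ hr, ofDigits_word_reverse _ _ _ hr]
  norm_num [Nat.ofDigits_cons]
  constructor
  · nlinarith
  · ring

theorem step_seven (n : ℕ) :
    f (Nat.ofDigits 10 (word [0, 0, 0] [9, 8] ([9, 9, 9, 9] ++ [0, 1]) n)) =
      Nat.ofDigits 10 (word [9, 9, 0] [9, 8, 9, 0, 0, 9] ([] ++ [0, 1]) n) := by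
  refine f_word_sub _ _ _ _ _ _ n (by simp) (by simp) (by simp) fun r hr => ?_
  simp only [ofDigits_word _ _ _ hr, ofDigits_word_reverse _ _ _ hr]
  norm_num [Nat.ofDigits_cons]
  ring

theorem step_eight (n : ℕ) :
    f (Nat.ofDigits 10 (word [9, 9, 0] [9, 8, 9, 0, 0, 9] ([] ++ [0, 1]) n)) =
      Nat.ofDigits 10 (word [0, 0, 0, 0] [9, 8] ([9, 9, 9, 9] ++ [0, 1]) n) := by
  refine f_word_add _ _ _ _ _ _ n (by simp) (by simp) (by simp) fun r hr => ?_
  simp only [ofDigits_word _ _ _ hr, ofDigits_word_reverse _ _ _ hr]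
  norm_num [Nat.ofDigits_cons]
  constructor
  · nlinarith
  · ring

theorem start_eq_word (n : ℕ) :
    11 * (10 ^ (n + 4) - 1) * 10 ^ (n + 2) =
      Nat.ofDigits 10 (word [0, 0] [9, 8] ([9, 9] ++ [0, 1]) n) := by
  have hr := ofDigits_replicate_nine n
  generalize Nat.ofDigits 10 (List.replicate n 9) = r at hr
  have h : 10 ^ (n + 4) - 1 = 10000 * r + 9999 := by
    rw [pow_add, ← hr]
    omega
  rw [h, ofDigits_word _ _ _ hr, pow_add, ← hr]
  norm_num [Nat.ofDigits_cons]
  ring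

theorem end_eq_word (n : ℕ) :
    Nat.ofDigits 10 (word [0, 0, 0, 0] [9, 8] ([9, 9, 9, 9] ++ [0, 1]) n) =
      11 * (10 ^ (n + 2 + 4) - 1) * 10 ^ (n + 2 + 2) := by
  have hr := ofDigits_replicate_nine n
  generalize Nat.ofDigits 10 (List.replicate n 9) = r at hr
  have h : 10 ^ (n + 2 + 4) - 1 = 1000000 * r + 999999 := by
    rw [add_assoc, pow_add, ← hr]
    omega
  rw [h, ofDigits_word _ _ _ hr, add_assoc, pow_add, ← hr]
  norm_num [Nat.ofDigits_cons]
  ring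

theorem eight_step_advance :
    ∀ n : ℕ, 1 ≤ n →
      f^[8] (11 * (10 ^ (n + 4) - 1) * 10 ^ (n + 2)) =
        11 * (10 ^ (n + 2 + 4) - 1) * 10 ^ (n + 2 + 2) := by
  intro n _
  rw [start_eq_word, ← end_eq_word]
  simp only [Function.iterate_succ_apply, Function.iterate_zero_apply]
  rw [step_one, step_two, step_three, step_four, step_five, step_six, step_seven, step_eight]
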